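/- Exponential suppression of short boundaries in the elongated phase: let μ₁ < log 6 and set r = 6·exp(−μ₁) − 1 > 0. Then there exist 0 < δ < ε < 1 and N₀ such that for all even N ≥ N₀ and all even m with 2 ≤ m ≤ δN, P_{N,μ₁}(m) ≤ (1 + r/2)^(−εN/2). -/

import Mathlib

open Filter Real MeasureTheory

/-- Number of rooted quasitriangulations of a sphere with a hole with `N` triangles and
`m` boundary edges (Goulden–Jackson), with `j = (N - m)/2`. -/
noncomputable def C0 (N m : ℕ) : ℝ :=
  (2 : ℝ) ^ ((N - m) / 2 + 2) * (Nat.factorial (2 * m + 3 * ((N - m) / 2) - 1) : ℝ) *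
    (Nat.factorial (2 * m - 3) : ℝ) /
    ((Nat.factorial ((N - m) / 2 + 1) : ℝ) * (Nat.factorial (2 * m + 2 * ((N - m) / 2)) : ℝ) *
      ((Nat.factorial (m - 2) : ℝ)) ^ 2)

/-- The filter "N → ∞ along even integers". -/
def evenAtTop : Filter ℕ := Filter.atTop ⊓ Filter.principal {N | Even N}
/-- Weight of boundary length m: w_{μ₁}(N,m) = exp(-μ₁ m/2) C₀(N,m). -/
noncomputable def w (μ₁ : ℝ) (N m : ℕ) : ℝ := Real.exp (-μ₁ * m / 2) * C0 N m

/-- Normalizing constant Θ_N(μ₁) = Σ_{m even, 2 ≤ m ≤ N} w_{μ₁}(N,m). -/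
noncomputable def Θ (μ₁ : ℝ) (N : ℕ) : ℝ :=
  ∑ m ∈ (Finset.range (N + 1)).filter (fun m => Even m ∧ 2 ≤ m), w μ₁ N m

/-- Boundary-length distribution P_{N,μ₁}(m) = w_{μ₁}(N,m)/Θ_N(μ₁). -/
noncomputable def P (μ₁ : ℝ) (N m : ℕ) : ℝ := w μ₁ N m / Θ μ₁ N

/-!
The ratio `C0 N (m + 2) / C0 N m` is an explicit rational function of `N` and `m`, and is at least
`6 (1 - η) / (1 + η) ^ 2` whenever `m + 2 ≤ η N`. Hence for any `q < 6 exp (-μ₁)` there is `η > 0`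
such that the weights grow by a factor `q` at each step `m → m + 2` as long as `m + 2 ≤ η N`.
Starting from `m ≤ η N / 4` there is room for `η N / 4` such steps, and the weight reached is still
only one of the terms of `Θ μ₁ N`.
-/

lemma one_lt_mul_exp_neg_iff {c x : ℝ} (hc : 0 < c) : 1 < c * exp (-x) ↔ x < log c := by
  rw [exp_neg, ← div_eq_mul_inv, one_lt_div (exp_pos x), lt_log_iff_exp_lt hc]

lemma exists_mul_one_add_sq_le_mul_one_sub {q s : ℝ} (h : q < s) :
    ∃ η : ℝ, 0 < η ∧ η < 1 ∧ q * (1 + η) ^ 2 ≤ s * (1 - η) := by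
  have hlt : ∀ᶠ η : ℝ in nhds 0, q * (1 + η) ^ 2 < s * (1 - η) :=
    ContinuousAt.eventually_lt (by fun_prop) (by fun_prop) (by simpa using h)
  obtain ⟨η, hη, hη0, hη1⟩ :=
    ((hlt.filter_mono nhdsWithin_le_nhds).and (Ioo_mem_nhdsGT one_pos)).exists
  exact ⟨η, hη0, hη1, hη.le⟩

lemma C0_pos (N m : ℕ) : 0 < C0 N m := by
  unfold C0
  positivity

lemma C0_eq_factorial_div (a j : ℕ) :
    C0 (a + 2 + 2 * j) (a + 2) =
      2 ^ (j + 2) * (2 * a + 3 * j + 3).factorial * (2 * a + 1).factorial /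
        ((j + 1).factorial * (2 * a + 2 * j + 4).factorial * (a.factorial : ℝ) ^ 2) := by
  have hj : (a + 2 + 2 * j - (a + 2)) / 2 = j := by omega
  have hnum : 2 * (a + 2) + 3 * j - 1 = 2 * a + 3 * j + 3 := by omega
  have hboundary : 2 * (a + 2) - 3 = 2 * a + 1 := by omega
  have hden : 2 * (a + 2) + 2 * j = 2 * a + 2 * j + 4 := by ring
  rw [C0, hj, hnum, hboundary, hden, Nat.add_sub_cancel]

lemma C0_add_two_mul_eq_C0_mul {N m : ℕ} (hm : 2 ≤ m) (hmN : m + 2 ≤ N) (hpar : N ≡ m [MOD 2]) :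
    C0 N (m + 2) * (2 * ((N + m + 1) * (N + m + 2)) * ((m - 1) * m)) =
      C0 N m * ((3 * N + m) * (N - m + 2) * ((2 * m - 1) * (2 * m + 1))) := by
  obtain ⟨a, rfl⟩ : ∃ a, m = a + 2 := ⟨m - 2, by omega⟩
  obtain ⟨j, rfl⟩ : ∃ j, N = a + 2 + 2 * (j + 1) :=
    ⟨(N - (a + 2)) / 2 - 1, by unfold Nat.ModEq at hpar; omega⟩
  have hnext : C0 (a + 2 + 2 * (j + 1)) (a + 2 + 2) = C0 (a + 2 + 2 + 2 * j) (a + 2 + 2) := by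
    congr 1
    ring
  rw [hnext, C0_eq_factorial_div, C0_eq_factorial_div,
    show 2 * (a + 2) + 3 * j + 3 = 2 * a + 3 * j + 6 + 1 by ring,
    show 2 * a + 3 * (j + 1) + 3 = 2 * a + 3 * j + 6 by ring,
    show 2 * (a + 2) + 2 * j + 4 = 2 * a + 2 * j + 6 + 2 by ring,
    show 2 * a + 2 * (j + 1) + 4 = 2 * a + 2 * j + 6 by ring,
    show 2 * (a + 2) + 1 = 2 * a + 1 + 4 by ring]
  simp only [Nat.factorial_succ]
  push_cast
  field_simp
  ring

lemma C0_mul_le_C0_add_two_mul {N m : ℕ} {η : ℝ} (hm : 2 ≤ m) (hmN : m + 2 ≤ N)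
    (hpar : N ≡ m [MOD 2]) (hη : (m : ℝ) + 2 ≤ η * N) :
    C0 N m * (6 * (1 - η)) ≤ C0 N (m + 2) * (1 + η) ^ 2 := by
  have hm' : (2 : ℝ) ≤ m := by exact_mod_cast hm
  have hmN' : (m : ℝ) + 2 ≤ N := by exact_mod_cast hmN
  have hC := (C0_pos N m).le
  have hC' := (C0_pos N (m + 2)).le
  have hfactor : 0 ≤ (N - m + 2 : ℝ) := by linarith
  have hboundary_pos : 0 < ((m - 1) * m : ℝ) := mul_pos (by linarith) (by linarith)
  have hnum : 3 * N * (N * (1 - η)) ≤ (3 * N + m) * (N - m + 2 : ℝ) :=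
    calc 3 * N * (N * (1 - η)) ≤ 3 * N * (N - m + 2 : ℝ) := by
          gcongr
          linarith
      _ ≤ (3 * N + m) * (N - m + 2 : ℝ) := by
          gcongr
          linarith
  have hden : (N + m + 1) * (N + m + 2 : ℝ) ≤ (N * (1 + η)) ^ 2 := by
    rw [sq]
    gcongr <;> linarith
  have hboundary : 4 * ((m - 1) * m : ℝ) ≤ (2 * m - 1) * (2 * m + 1) := by linarith
  have hpos : (0 : ℝ) < 2 * N ^ 2 * ((m - 1) * m) := by
    have : (0 : ℝ) < N := by linarith
    positivity
  refine le_of_mul_le_mul_right ?_ hpos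
  calc C0 N m * (6 * (1 - η)) * (2 * N ^ 2 * ((m - 1) * m))
      = C0 N m * (3 * N * (N * (1 - η)) * (4 * ((m - 1) * m))) := by ring
    _ ≤ C0 N m * ((3 * N + m) * (N - m + 2) * ((2 * m - 1) * (2 * m + 1))) := by
      gcongr
    _ = C0 N (m + 2) * (2 * ((N + m + 1) * (N + m + 2)) * ((m - 1) * m)) :=
      (C0_add_two_mul_eq_C0_mul hm hmN hpar).symm
    _ ≤ C0 N (m + 2) * (2 * (N * (1 + η)) ^ 2 * ((m - 1) * m)) := by
      gcongr
    _ = C0 N (m + 2) * (1 + η) ^ 2 * (2 * N ^ 2 * ((m - 1) * m)) := by ring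

lemma w_pos (μ₁ : ℝ) (N m : ℕ) : 0 < w μ₁ N m :=
  mul_pos (exp_pos _) (C0_pos N m)

section GeometricGrowth

variable {μ₁ q η : ℝ} {N m : ℕ}

lemma mul_w_le_w_add_two (hq : q * (1 + η) ^ 2 ≤ 6 * exp (-μ₁) * (1 - η)) (hm : 2 ≤ m)
    (hmN : m + 2 ≤ N) (hpar : N ≡ m [MOD 2]) (hη : (m : ℝ) + 2 ≤ η * N) :
    q * w μ₁ N m ≤ w μ₁ N (m + 2) := by
  have hη0 : 0 < η := pos_of_mul_pos_left (lt_of_lt_of_le (by positivity) hη) N.cast_nonneg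
  have hexp : exp (-μ₁ * (m + 2 : ℕ) / 2) = exp (-μ₁ * m / 2) * exp (-μ₁) := by
    rw [← exp_add]
    push_cast
    ring_nf
  have hpos : 0 < (1 + η) ^ 2 := by positivity
  refine le_of_mul_le_mul_right ?_ hpos
  calc q * w μ₁ N m * (1 + η) ^ 2
      = w μ₁ N m * (q * (1 + η) ^ 2) := by ring
    _ ≤ w μ₁ N m * (6 * exp (-μ₁) * (1 - η)) := by
      gcongr
      exact (w_pos μ₁ N m).le
    _ = exp (-μ₁ * m / 2) * exp (-μ₁) * (C0 N m * (6 * (1 - η))) := by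
      rw [w]
      ring
    _ ≤ exp (-μ₁ * m / 2) * exp (-μ₁) * (C0 N (m + 2) * (1 + η) ^ 2) := by
      gcongr exp (-μ₁ * m / 2) * exp (-μ₁) * ?_
      exact C0_mul_le_C0_add_two_mul hm hmN hpar hη
    _ = w μ₁ N (m + 2) * (1 + η) ^ 2 := by
      rw [w, hexp]
      ring

lemma pow_mul_w_le_w_add_two_mul {k : ℕ} (hq0 : 0 ≤ q)
    (hq : q * (1 + η) ^ 2 ≤ 6 * exp (-μ₁) * (1 - η)) (hm : 2 ≤ m) (hmN : m + 2 * k ≤ N)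
    (hpar : N ≡ m [MOD 2]) (hη : (m : ℝ) + 2 * k ≤ η * N) :
    q ^ k * w μ₁ N m ≤ w μ₁ N (m + 2 * k) := by
  refine geom_le (u := fun i ↦ w μ₁ N (m + 2 * i)) hq0 k fun i hi ↦ ?_
  have hik : (i : ℝ) + 1 ≤ k := by exact_mod_cast hi
  refine mul_w_le_w_add_two hq (by omega) (by omega) ?_ ?_
  · unfold Nat.ModEq at hpar ⊢
    omega
  · push_cast
    linarith

end GeometricGrowth

lemma w_le_Θ (μ₁ : ℝ) {N n : ℕ} (hn : Even n) (hn2 : 2 ≤ n) (hnN : n ≤ N) :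
    w μ₁ N n ≤ Θ μ₁ N :=
  Finset.single_le_sum (f := w μ₁ N) (fun i _ ↦ (w_pos μ₁ N i).le)
    (Finset.mem_filter.mpr ⟨Finset.mem_range.mpr (by omega), hn, hn2⟩)

lemma P_le_inv_of_mul_w_le {μ₁ c : ℝ} {N m n : ℕ} (hc : 0 < c) (hn : Even n) (hn2 : 2 ≤ n)
    (hnN : n ≤ N) (h : c * w μ₁ N m ≤ w μ₁ N n) : P μ₁ N m ≤ c⁻¹ := by
  have hle := w_le_Θ μ₁ hn hn2 hnN
  rw [P, div_le_iff₀ ((w_pos μ₁ N n).trans_le hle), le_inv_mul_iff₀ hc]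
  exact h.trans hle

theorem short_boundary_suppression_general {μ₁ q : ℝ} (hq : 1 ≤ q) (hqμ : q < 6 * exp (-μ₁)) :
    ∃ δ ε : ℝ, 0 < δ ∧ δ < ε ∧ ε < 1 ∧
      ∃ N₀ : ℕ, ∀ N : ℕ, N₀ ≤ N → Even N →
        ∀ m : ℕ, Even m → 2 ≤ m → (m : ℝ) ≤ δ * N →
          P μ₁ N m ≤ q ^ (-(ε * N / 2)) := by
  obtain ⟨η, hη0, hη1, hη⟩ := exists_mul_one_add_sq_le_mul_one_sub hqμ
  refine ⟨η / 4, η / 2, by linarith, by linarith, by linarith, ⌈8 / η⌉₊, ?_⟩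
  intro N hN hNeven m hmeven hm hmδ
  have hq0 : 0 < q := by linarith
  have hηN : 8 ≤ η * N := (div_le_iff₀' hη0).mp (Nat.ceil_le.mp hN)
  set k := ⌈η / 2 * N / 2⌉₊
  have hk : η / 2 * N / 2 ≤ k := Nat.le_ceil _
  have hk' : (k : ℝ) < η / 2 * N / 2 + 1 := Nat.ceil_lt_add_one (by positivity)
  have hroom : (m : ℝ) + 2 * k ≤ η * N := by linarith
  have hroom' : m + 2 * k ≤ N := by
    have : (m : ℝ) + 2 * k ≤ N := hroom.trans (mul_le_of_le_one_left N.cast_nonneg hη1.le)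
    exact_mod_cast this
  have hpar : N ≡ m [MOD 2] := (Nat.even_iff.mp hNeven).trans (Nat.even_iff.mp hmeven).symm
  have hgrowth : q ^ k * w μ₁ N m ≤ w μ₁ N (m + 2 * k) :=
    pow_mul_w_le_w_add_two_mul hq0.le hη hm hroom' hpar hroom
  calc P μ₁ N m ≤ (q ^ k)⁻¹ :=
        P_le_inv_of_mul_w_le (pow_pos hq0 k) (hmeven.add (even_two_mul k)) (by omega) hroom' hgrowth
    _ = q ^ (-(k : ℝ)) := by rw [rpow_neg hq0.le, rpow_natCast]
    _ ≤ q ^ (-(η / 2 * N / 2)) := rpow_le_rpow_of_exponent_le hq (neg_le_neg hk)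

/-- Exponential suppression of short boundaries in the elongated phase: with
r = 6 exp(-μ₁) - 1 > 0, there are 0 < δ < ε < 1 such that for all large even N and all
even m with 2 ≤ m ≤ δN, P_{N,μ₁}(m) ≤ (1 + r/2)^(-εN/2). -/
theorem short_boundary_suppression (μ₁ : ℝ) (hμ : μ₁ < Real.log 6)
    (r : ℝ) (hr : r = 6 * Real.exp (-μ₁) - 1) :
    0 < r ∧
    ∃ δ ε : ℝ, 0 < δ ∧ δ < ε ∧ ε < 1 ∧
      ∃ N₀ : ℕ, ∀ N : ℕ, N₀ ≤ N → Even N →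
        ∀ m : ℕ, Even m → 2 ≤ m → (m : ℝ) ≤ δ * N →
          P μ₁ N m ≤ (1 + r / 2) ^ (-(ε * N / 2)) := by
  have hr0 : 0 < r := by linarith [(one_lt_mul_exp_neg_iff (by norm_num)).mpr hμ]
  exact ⟨hr0, short_boundary_suppression_general (by linarith) (by linarith)⟩
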